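/- arXiv:1010.3492 — 7 statements merged into one kernel-verified Lean document; each statement's English description precedes it below -/
import Mathlib

section
/- Let a₁, a₂, a₃ be real parameters and let Λ be the 2×2 matrix with entries Λ₁₁ = a₁cos²φ + a₂sin²φ, Λ₁₂ = ((a₁−a₂)/2) sin 2φ · (cos θ/sin θ), Λ₂₁ = ((a₁−a₂)/2) sin 2φ · cos θ sin θ, Λ₂₂ = a₃ sin²θ + (a₁ sin²φ + a₂ cos²φ) cos²θ. Define the bivector π′ on the open set where sin θ ≠ 0 by {φ,θ}_{π′} = 0, {q_i, p_j}_{π′} = Λ_{ij} (where (q₁,q₂,p₁,p₂) = (φ,θ,p_φ,p_θ)), and {p_φ, p_θ}_{π′} = (∂Λ₁₁/∂θ − ∂Λ₁₂/∂φ) p_φ + (∂Λ₂₁/∂θ − ∂Λ₂₂/∂φ) p_θ. Then π′ is a Poisson bivector and is compatible with the canonical bivector P, i.e. π′ and P + π′ both satisfy the Jacobi identity. -/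
open Real

/-- Partial derivative in the `i`-th coordinate direction on `ℝ⁴`
(coordinates `z 0 = φ`, `z 1 = θ`, `z 2 = p_φ`, `z 3 = p_θ`). -/
noncomputable def pd (i : Fin 4) (F : (Fin 4 → ℝ) → ℝ) (z : Fin 4 → ℝ) : ℝ :=
  fderiv ℝ F z (Pi.single i 1)

/-- The Poisson bracket of `F` and `G` defined by a bivector `π`. -/
noncomputable def pbiv (Pv : (Fin 4 → ℝ) → Matrix (Fin 4) (Fin 4) ℝ)
    (F G : (Fin 4 → ℝ) → ℝ) (z : Fin 4 → ℝ) : ℝ :=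
  ∑ i : Fin 4, ∑ j : Fin 4, Pv z i j * pd i F z * pd j G z

/-- A bivector `π` satisfies the Jacobi identity (is a Poisson bivector) on `U`. -/
def IsPoissonOn (Pv : (Fin 4 → ℝ) → Matrix (Fin 4) (Fin 4) ℝ)
    (U : Set (Fin 4 → ℝ)) : Prop :=
  ∀ z ∈ U, ∀ i j k : Fin 4,
    (∑ l : Fin 4, (Pv z l i * pd l (fun w => Pv w j k) z
      + Pv z l j * pd l (fun w => Pv w k i) z
      + Pv z l k * pd l (fun w => Pv w i j) z)) = 0

/-- The antisymmetric matrix with the given upper-triangular entries: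
`a = {φ,θ}`, `b = {φ,p_φ}`, `c = {φ,p_θ}`, `d = {θ,p_φ}`, `e = {θ,p_θ}`, `f = {p_φ,p_θ}`. -/
noncomputable def skew (a b c d e f : ℝ) : Matrix (Fin 4) (Fin 4) ℝ :=
  !![0, a, b, c; -a, 0, d, e; -b, -d, 0, f; -c, -e, -f, 0]

/-- The canonical Poisson bivector: `{φ,p_φ} = {θ,p_θ} = 1`, all other brackets zero. -/
noncomputable def Pcan : Matrix (Fin 4) (Fin 4) ℝ :=
  !![0, 0, 1, 0; 0, 0, 0, 1; -1, 0, 0, 0; 0, -1, 0, 0]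

noncomputable def L11 (a₁ a₂ : ℝ) (z : Fin 4 → ℝ) : ℝ :=
  a₁ * cos (z 0) ^ 2 + a₂ * sin (z 0) ^ 2

noncomputable def L12 (a₁ a₂ : ℝ) (z : Fin 4 → ℝ) : ℝ :=
  (a₁ - a₂) / 2 * sin (2 * z 0) * (cos (z 1) / sin (z 1))

noncomputable def L21 (a₁ a₂ : ℝ) (z : Fin 4 → ℝ) : ℝ :=
  (a₁ - a₂) / 2 * sin (2 * z 0) * (cos (z 1) * sin (z 1))

noncomputable def L22 (a₁ a₂ a₃ : ℝ) (z : Fin 4 → ℝ) : ℝ :=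
  a₃ * sin (z 1) ^ 2 + (a₁ * sin (z 0) ^ 2 + a₂ * cos (z 0) ^ 2) * cos (z 1) ^ 2

/-- The Poisson bivector `π′` of the Neumann system, determined by the potential
matrix `Λ`: `{φ,θ} = 0`, `{q_i,p_j} = Λ_{ij}`,
`{p_φ,p_θ} = (∂Λ₁₁/∂θ − ∂Λ₁₂/∂φ) p_φ + (∂Λ₂₁/∂θ − ∂Λ₂₂/∂φ) p_θ`. -/
noncomputable def piNeu (a₁ a₂ a₃ : ℝ) (z : Fin 4 → ℝ) : Matrix (Fin 4) (Fin 4) ℝ :=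
  skew 0 (L11 a₁ a₂ z) (L12 a₁ a₂ z) (L21 a₁ a₂ z) (L22 a₁ a₂ a₃ z)
    ((pd 1 (L11 a₁ a₂) z - pd 0 (L12 a₁ a₂) z) * z 2
      + (pd 1 (L21 a₁ a₂) z - pd 0 (L22 a₁ a₂ a₃) z) * z 3)

/-- Explicit form of the `{p_φ,p_θ}` entry. -/
noncomputable def Fex (a₁ a₂ : ℝ) (z : Fin 4 → ℝ) : ℝ :=
  -(a₁ - a₂) * (cos (2 * z 0) * (cos (z 1) / sin (z 1)) * z 2 + sin (2 * z 0) / 2 * z 3)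

/-- The linear form with the given coordinates. -/
noncomputable def lf (g : Fin 4 → ℝ) : (Fin 4 → ℝ) →L[ℝ] ℝ :=
  ∑ i, g i • ContinuousLinearMap.proj (R := ℝ) (φ := fun _ : Fin 4 => ℝ) i

lemma lf_apply (g v : Fin 4 → ℝ) : lf g v = ∑ i, g i * v i := by
  simp [lf]

lemma pd_of {F : (Fin 4 → ℝ) → ℝ} {g z : Fin 4 → ℝ} (h : HasFDerivAt F (lf g) z) (i : Fin 4) :
    pd i F z = g i := by
  rw [pd, h.fderiv, lf_apply]
  simp [Pi.single_apply]

lemma hc (i : Fin 4) (z : Fin 4 → ℝ) :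
    HasFDerivAt (fun w : Fin 4 → ℝ => w i) (lf (Pi.single i 1)) z := by
  have h := (ContinuousLinearMap.proj (R := ℝ) (φ := fun _ : Fin 4 => ℝ) i).hasFDerivAt (x := z)
  refine HasFDerivAt.congr_fderiv h ?_
  ext v
  simp [lf_apply, Pi.single_apply]

lemma hcomp {A : ℝ → ℝ} {A' : ℝ} (i : Fin 4) (z : Fin 4 → ℝ) (h : HasDerivAt A A' (z i)) :
    HasFDerivAt (fun w : Fin 4 → ℝ => A (w i)) (lf (A' • Pi.single i 1)) z := by
  have := h.comp_hasFDerivAt z (hc i z)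
  refine HasFDerivAt.congr_fderiv this ?_
  ext v
  simp [lf_apply, Pi.single_apply]

lemma hmul {A B : (Fin 4 → ℝ) → ℝ} {f g z : Fin 4 → ℝ} (hA : HasFDerivAt A (lf f) z)
    (hB : HasFDerivAt B (lf g) z) :
    HasFDerivAt (fun w => A w * B w) (lf (A z • g + B z • f)) z := by
  have := hA.mul hB
  refine HasFDerivAt.congr_fderiv this ?_
  ext v
  simp [lf_apply, Fin.sum_univ_four]
  ring

lemma hadd {A B : (Fin 4 → ℝ) → ℝ} {f g z : Fin 4 → ℝ} (hA : HasFDerivAt A (lf f) z)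
    (hB : HasFDerivAt B (lf g) z) :
    HasFDerivAt (fun w => A w + B w) (lf (f + g)) z := by
  have := hA.add hB
  refine HasFDerivAt.congr_fderiv this ?_
  ext v
  simp [lf_apply, Fin.sum_univ_four]
  ring

lemma dsq_sin (x : ℝ) : HasDerivAt (fun x => sin x ^ 2) (2 * sin x * cos x) x := by
  have := (hasDerivAt_sin x).pow 2
  refine HasDerivAt.congr_deriv this ?_
  simp

lemma dsq_cos (x : ℝ) : HasDerivAt (fun x => cos x ^ 2) (-(2 * sin x * cos x)) x := by
  have := (hasDerivAt_cos x).pow 2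
  refine HasDerivAt.congr_deriv this ?_
  simp; ring

lemma dsin2 (x : ℝ) : HasDerivAt (fun x => sin (2 * x)) (2 * cos (2 * x)) x := by
  have := ((hasDerivAt_id x).const_mul 2).sin
  refine HasDerivAt.congr_deriv this ?_
  simp; ring

lemma dcos2 (x : ℝ) : HasDerivAt (fun x => cos (2 * x)) (-(2 * sin (2 * x))) x := by
  have := ((hasDerivAt_id x).const_mul 2).cos
  refine HasDerivAt.congr_deriv this ?_
  simp; ring

lemma dcot (x : ℝ) (h : sin x ≠ 0) :
    HasDerivAt (fun x => cos x / sin x) (-(1 + (cos x / sin x) ^ 2)) x := by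
  have := (hasDerivAt_cos x).div (hasDerivAt_sin x) h
  refine HasDerivAt.congr_deriv this ?_
  field_simp
  ring

lemma hL11 (a₁ a₂ : ℝ) (z : Fin 4 → ℝ) : HasFDerivAt (L11 a₁ a₂)
    (lf ![-(a₁ - a₂) * (2 * sin (z 0) * cos (z 0)), 0, 0, 0]) z := by
  have := hcomp 0 z (((dsq_cos (z 0)).const_mul a₁).add ((dsq_sin (z 0)).const_mul a₂))
  refine HasFDerivAt.congr_fderiv this (congrArg lf ?_)
  ext i; fin_cases i <;> simp <;> ring

lemma hL12 (a₁ a₂ : ℝ) (z : Fin 4 → ℝ) (h : sin (z 1) ≠ 0) : HasFDerivAt (L12 a₁ a₂)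
    (lf ![(a₁ - a₂) * cos (2 * z 0) * (cos (z 1) / sin (z 1)),
      -((a₁ - a₂) / 2 * sin (2 * z 0) * (1 + (cos (z 1) / sin (z 1)) ^ 2)), 0, 0]) z := by
  have := hmul (hcomp 0 z ((dsin2 (z 0)).const_mul ((a₁ - a₂) / 2))) (hcomp 1 z (dcot (z 1) h))
  refine HasFDerivAt.congr_fderiv this (congrArg lf ?_)
  ext i; fin_cases i <;> simp <;> ring

lemma hL21 (a₁ a₂ : ℝ) (z : Fin 4 → ℝ) : HasFDerivAt (L21 a₁ a₂)
    (lf ![(a₁ - a₂) * cos (2 * z 0) * (cos (z 1) * sin (z 1)),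
      (a₁ - a₂) / 2 * sin (2 * z 0) * (cos (z 1) ^ 2 - sin (z 1) ^ 2), 0, 0]) z := by
  have := hmul (hcomp 0 z ((dsin2 (z 0)).const_mul ((a₁ - a₂) / 2)))
    (hcomp 1 z ((hasDerivAt_cos (z 1)).mul (hasDerivAt_sin (z 1))))
  refine HasFDerivAt.congr_fderiv this (congrArg lf ?_)
  ext i; fin_cases i <;> simp [-mul_eq_mul_left_iff] <;> ring

lemma hL22 (a₁ a₂ a₃ : ℝ) (z : Fin 4 → ℝ) : HasFDerivAt (L22 a₁ a₂ a₃)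
    (lf ![(a₁ - a₂) * (2 * sin (z 0) * cos (z 0)) * cos (z 1) ^ 2,
      (a₃ - (a₁ * sin (z 0) ^ 2 + a₂ * cos (z 0) ^ 2)) * (2 * sin (z 1) * cos (z 1)), 0, 0]) z := by
  have := hadd (hcomp 1 z ((dsq_sin (z 1)).const_mul a₃)) (hmul
    (hcomp 0 z (((dsq_sin (z 0)).const_mul a₁).add ((dsq_cos (z 0)).const_mul a₂)))
    (hcomp 1 z (dsq_cos (z 1))))
  refine HasFDerivAt.congr_fderiv this (congrArg lf ?_)
  ext i; fin_cases i <;> simp <;> ring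

lemma hFex (a₁ a₂ : ℝ) (z : Fin 4 → ℝ) (h : sin (z 1) ≠ 0) : HasFDerivAt (Fex a₁ a₂)
    (lf ![-(a₁ - a₂) * (-(2 * sin (2 * z 0)) * (cos (z 1) / sin (z 1)) * z 2 + cos (2 * z 0) * z 3),
      (a₁ - a₂) * cos (2 * z 0) * (1 + (cos (z 1) / sin (z 1)) ^ 2) * z 2,
      -(a₁ - a₂) * (cos (2 * z 0) * (cos (z 1) / sin (z 1))),
      -(a₁ - a₂) * (sin (2 * z 0) / 2)]) z := by
  have := hmul (hcomp 0 z (hasDerivAt_const (z 0) (-(a₁ - a₂))))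
    (hadd (hmul (hmul (hcomp 0 z (dcos2 (z 0))) (hcomp 1 z (dcot (z 1) h))) (hc 2 z))
    (hmul (hcomp 0 z ((dsin2 (z 0)).div_const 2)) (hc 3 z)))
  refine HasFDerivAt.congr_fderiv this (congrArg lf ?_)
  ext i; fin_cases i <;> simp <;> ring

lemma piNeu_eq (a₁ a₂ a₃ : ℝ) (z : Fin 4 → ℝ) (h : sin (z 1) ≠ 0) :
    piNeu a₁ a₂ a₃ z = skew 0 (L11 a₁ a₂ z) (L12 a₁ a₂ z) (L21 a₁ a₂ z) (L22 a₁ a₂ a₃ z)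
      (Fex a₁ a₂ z) := by
  rw [piNeu, pd_of (hL11 a₁ a₂ z), pd_of (hL12 a₁ a₂ z h), pd_of (hL21 a₁ a₂ z),
    pd_of (hL22 a₁ a₂ a₃ z)]
  congr 1
  simp only [Fex, Matrix.cons_val_zero, Matrix.cons_val_one, sin_two_mul (z 0), sin_sq (z 1)]
  ring

lemma pd_congr {F G : (Fin 4 → ℝ) → ℝ} {z : Fin 4 → ℝ} (h : F =ᶠ[nhds z] G) (i : Fin 4) :
    pd i F z = pd i G z := by
  rw [pd, pd, h.fderiv_eq]

lemma pd_neg (F : (Fin 4 → ℝ) → ℝ) (z : Fin 4 → ℝ) (i : Fin 4) :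
    pd i (fun w => -F w) z = -pd i F z := by
  simp [pd, fderiv_fun_neg]

lemma pd_cst (c : ℝ) (z : Fin 4 → ℝ) (i : Fin 4) : pd i (fun _ => c) z = 0 := by
  simp [pd]

lemma pd_cadd (c : ℝ) (F : (Fin 4 → ℝ) → ℝ) (z : Fin 4 → ℝ) (i : Fin 4) :
    pd i (fun w => c + F w) z = pd i F z := by
  simp [pd, fderiv_const_add]

set_option maxHeartbeats 4000000 in
lemma jac_skew (b c d e f : (Fin 4 → ℝ) → ℝ) (z : Fin 4 → ℝ)
    (hb : pd 2 b z = 0 ∧ pd 3 b z = 0) (hc : pd 2 c z = 0 ∧ pd 3 c z = 0)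
    (hd : pd 2 d z = 0 ∧ pd 3 d z = 0) (he : pd 2 e z = 0 ∧ pd 3 e z = 0)
    (J1 : b z * pd 2 f z + c z * pd 3 f z + b z * pd 0 c z + d z * pd 1 c z
      - c z * pd 0 b z - e z * pd 1 b z = 0)
    (J2 : d z * pd 2 f z + e z * pd 3 f z + b z * pd 0 e z + d z * pd 1 e z
      - c z * pd 0 d z - e z * pd 1 d z = 0)
    (i j k : Fin 4) :
    (∑ l : Fin 4, ((skew 0 (b z) (c z) (d z) (e z) (f z)) l i
        * pd l (fun w => (skew 0 (b w) (c w) (d w) (e w) (f w)) j k) z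
      + (skew 0 (b z) (c z) (d z) (e z) (f z)) l j
        * pd l (fun w => (skew 0 (b w) (c w) (d w) (e w) (f w)) k i) z
      + (skew 0 (b z) (c z) (d z) (e z) (f z)) l k
        * pd l (fun w => (skew 0 (b w) (c w) (d w) (e w) (f w)) i j) z)) = 0 := by
  obtain ⟨hb2, hb3⟩ := hb
  obtain ⟨hc2, hc3⟩ := hc
  obtain ⟨hd2, hd3⟩ := hd
  obtain ⟨he2, he3⟩ := he
  fin_cases i <;> fin_cases j <;> fin_cases k <;>
    simp [skew, Fin.sum_univ_four, pd_neg, pd_cst, hb2, hb3, hc2, hc3, hd2, hd3, he2, he3] <;>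
    linarith [J1, J2]

lemma main_aux (s a₁ a₂ a₃ : ℝ) (N : (Fin 4 → ℝ) → Matrix (Fin 4) (Fin 4) ℝ)
    (hN : ∀ z, sin (z 1) ≠ 0 → N z = skew 0 (s + L11 a₁ a₂ z) (L12 a₁ a₂ z) (L21 a₁ a₂ z)
      (s + L22 a₁ a₂ a₃ z) (Fex a₁ a₂ z)) :
    IsPoissonOn N {z | sin (z 1) ≠ 0} := by
  intro z hz i j k
  have hz' : sin (z 1) ≠ 0 := hz
  have hev : ∀ᶠ w in nhds z, sin (w 1) ≠ 0 := by
    have hcont : Continuous fun w : Fin 4 → ℝ => sin (w 1) := by fun_prop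
    exact hcont.continuousAt.eventually_ne hz'
  have hp : ∀ l x y, pd l (fun w => N w x y) z = pd l (fun w => (skew 0 (s + L11 a₁ a₂ w)
      (L12 a₁ a₂ w) (L21 a₁ a₂ w) (s + L22 a₁ a₂ a₃ w) (Fex a₁ a₂ w)) x y) z := by
    intro l x y
    apply pd_congr
    filter_upwards [hev] with w hw
    rw [hN w hw]
  simp only [hp, hN z hz']
  have hs : sin (z 0) ^ 2 = 1 - cos (z 0) ^ 2 := sin_sq _
  have ht : sin (z 1) ^ 2 = 1 - cos (z 1) ^ 2 := sin_sq _
  apply jac_skew (fun w => s + L11 a₁ a₂ w) (L12 a₁ a₂) (L21 a₁ a₂)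
    (fun w => s + L22 a₁ a₂ a₃ w) (Fex a₁ a₂) z
  all_goals simp only [pd_cadd, pd_of (hL11 a₁ a₂ z), pd_of (hL12 a₁ a₂ z hz'),
    pd_of (hL21 a₁ a₂ z), pd_of (hL22 a₁ a₂ a₃ z), pd_of (hFex a₁ a₂ z hz')]
  · simp
  · simp
  · simp
  · simp
  · simp only [L11, L12, L21, L22, sin_two_mul, cos_two_mul, Matrix.cons_val]
    field_simp
    generalize sin (z 0) = S at *
    generalize cos (z 0) = C at *
    generalize sin (z 1) = T at *
    generalize cos (z 1) = D at *
    grind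
  · simp only [L11, L12, L21, L22, sin_two_mul, cos_two_mul, Matrix.cons_val]
    field_simp
    generalize sin (z 0) = S at *
    generalize cos (z 0) = C at *
    generalize sin (z 1) = T at *
    generalize cos (z 1) = D at *
    grind

theorem statement2 (a₁ a₂ a₃ : ℝ) :
    IsPoissonOn (piNeu a₁ a₂ a₃) {z | sin (z 1) ≠ 0} ∧
    IsPoissonOn (fun z => Pcan + piNeu a₁ a₂ a₃ z) {z | sin (z 1) ≠ 0} := by
  constructor
  · apply main_aux 0 a₁ a₂ a₃
    intro z hz
    simp [piNeu_eq a₁ a₂ a₃ z hz]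
  · apply main_aux 1 a₁ a₂ a₃
    intro z hz
    simp only [piNeu_eq a₁ a₂ a₃ z hz]
    ext i j
    fin_cases i <;> fin_cases j <;> simp [Pcan, skew] <;> ring
end

section
/- Let a₁, a₂, a₃ be real parameters, let x₁ = sin φ sin θ, x₂ = cos φ sin θ, x₃ = cos θ, and let Λ be the 2×2 matrix with entries Λ₁₁ = a₁cos²φ + a₂sin²φ, Λ₁₂ = ((a₁−a₂)/2) sin 2φ · (cos θ/sin θ), Λ₂₁ = ((a₁−a₂)/2) sin 2φ · cos θ sin θ, Λ₂₂ = a₃ sin²θ + (a₁ sin²φ + a₂ cos²φ) cos²θ. Then for every λ ∈ ℝ and every (φ,θ) with sin θ ≠ 0, one has (λ−a₂)(λ−a₃)x₁² + (λ−a₁)(λ−a₃)x₂² + (λ−a₁)(λ−a₂)x₃² = det(λ·I₂ − Λ), where I₂ is the 2×2 identity matrix. (Equivalently, the eigenvalues of Λ are the elliptic coordinates u₁, u₂ on the unit sphere determined by x₁²/(λ−a₁) + x₂²/(λ−a₂) + x₃²/(λ−a₃) = (λ−u₁)(λ−u₂)/((λ−a₁)(λ−a₂)(λ−a₃)).) 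-/
open Real

theorem statement4 (a₁ a₂ a₃ t φ θ : ℝ) (h : sin θ ≠ 0) :
    (t - a₂) * (t - a₃) * (sin φ * sin θ) ^ 2
      + (t - a₁) * (t - a₃) * (cos φ * sin θ) ^ 2
      + (t - a₁) * (t - a₂) * (cos θ) ^ 2
    = Matrix.det (t • (1 : Matrix (Fin 2) (Fin 2) ℝ) -
        !![a₁ * cos φ ^ 2 + a₂ * sin φ ^ 2,
           (a₁ - a₂) / 2 * sin (2 * φ) * (cos θ / sin θ);
           (a₁ - a₂) / 2 * sin (2 * φ) * (cos θ * sin θ),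
           a₃ * sin θ ^ 2 + (a₁ * sin φ ^ 2 + a₂ * cos φ ^ 2) * cos θ ^ 2]) := by
  have e : cos θ / sin θ * (cos θ * sin θ) = cos θ ^ 2 := by
    field_simp
  have h1 : sin φ ^ 2 = 1 - cos φ ^ 2 := sin_sq φ
  have h2 : sin θ ^ 2 = 1 - cos θ ^ 2 := sin_sq θ
  have e2 : (a₁ - a₂) / 2 * sin (2 * φ) * (cos θ / sin θ) *
      ((a₁ - a₂) / 2 * sin (2 * φ) * (cos θ * sin θ))
      = (a₁ - a₂) ^ 2 * (sin φ ^ 2 * cos φ ^ 2) * cos θ ^ 2 := by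
    rw [← e, sin_two_mul]
    ring
  rw [Matrix.det_fin_two]
  simp only [Matrix.sub_apply, Matrix.smul_apply, Matrix.one_apply, Matrix.of_apply,
    Matrix.cons_val', Matrix.cons_val_zero, Matrix.cons_val_one, Matrix.cons_val_fin_one,
    smul_eq_mul, if_true, zero_ne_one, one_ne_zero, if_false, mul_zero, mul_one, zero_sub,
    neg_mul_neg]
  rw [e2, mul_pow, mul_pow, h1, h2]
  ring
end

section
/- Let g, h be smooth nowhere-vanishing real functions of θ on an open interval I, let K be a smooth function on I with K′ = h/g, let α ∈ ℂ, and set i = √(−1), F = (g(θ) p_θ − i h(θ) p_φ)². Define the complex bivector π′ on ℝ × I × ℝ² by {φ,θ}_{π′} = −(g(θ)/(2h(θ))) ∂F/∂p_φ, {φ,p_φ}_{π′} = α e^{iφ − K(θ)}, {φ,p_θ}_{π′} = −(i/2)(∂F/∂θ + (2h(θ)/g(θ)) F), {θ,p_φ}_{π′} = 0, {θ,p_θ}_{π′} = F + α e^{iφ − K(θ)}, {p_φ,p_θ}_{π′} = α e^{iφ − K(θ)}(−K′(θ) p_φ − i p_θ). Then π′ is a Poisson bivector compatible with the canonical bivector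 P. -/
open Real Complex

/-- Partial derivative of a complex-valued function in the `i`-th coordinate
direction on `ℝ⁴` (coordinates `z 0 = φ`, `z 1 = θ`, `z 2 = p_φ`, `z 3 = p_θ`). -/
noncomputable def pdC (i : Fin 4) (F : (Fin 4 → ℝ) → ℂ) (z : Fin 4 → ℝ) : ℂ :=
  fderiv ℝ F z (Pi.single i 1)

/-- The Poisson bracket of complex-valued `F` and `G` defined by a complex bivector. -/
noncomputable def pbivC (Pv : (Fin 4 → ℝ) → Matrix (Fin 4) (Fin 4) ℂ)
    (F G : (Fin 4 → ℝ) → ℂ) (z : Fin 4 → ℝ) : ℂ :=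
  ∑ i : Fin 4, ∑ j : Fin 4, Pv z i j * pdC i F z * pdC j G z

/-- A complex bivector satisfies the Jacobi identity (is a Poisson bivector) on `U`. -/
def IsPoissonOnC (Pv : (Fin 4 → ℝ) → Matrix (Fin 4) (Fin 4) ℂ)
    (U : Set (Fin 4 → ℝ)) : Prop :=
  ∀ z ∈ U, ∀ i j k : Fin 4,
    (∑ l : Fin 4, (Pv z l i * pdC l (fun w => Pv w j k) z
      + Pv z l j * pdC l (fun w => Pv w k i) z
      + Pv z l k * pdC l (fun w => Pv w i j) z)) = 0

/-- The antisymmetric complex matrix with the given upper-triangular entries: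
`a = {φ,θ}`, `b = {φ,p_φ}`, `c = {φ,p_θ}`, `d = {θ,p_φ}`, `e = {θ,p_θ}`, `f = {p_φ,p_θ}`. -/
noncomputable def skewC (a b c d e f : ℂ) : Matrix (Fin 4) (Fin 4) ℂ :=
  !![0, a, b, c; -a, 0, d, e; -b, -d, 0, f; -c, -e, -f, 0]

/-- The canonical Poisson bivector (as a complex matrix):
`{φ,p_φ} = {θ,p_θ} = 1`, all other coordinate brackets zero. -/
noncomputable def PcanC : Matrix (Fin 4) (Fin 4) ℂ :=
  !![0, 0, 1, 0; 0, 0, 0, 1; -1, 0, 0, 0; 0, -1, 0, 0]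

/-- `F = (g(θ) p_θ − i h(θ) p_φ)²`. -/
noncomputable def Fgh (g h : ℝ → ℝ) (z : Fin 4 → ℝ) : ℂ :=
  ((g (z 1) : ℂ) * (z 3 : ℂ) - Complex.I * (h (z 1) : ℂ) * (z 2 : ℂ)) ^ 2

/-- The complex bivector `π′` with entries
`{φ,θ} = −(g/(2h)) ∂F/∂p_φ`, `{φ,p_φ} = α e^{iφ−K(θ)}`,
`{φ,p_θ} = −(i/2)(∂F/∂θ + (2h/g) F)`, `{θ,p_φ} = 0`, `{θ,p_θ} = F + α e^{iφ−K(θ)}`,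
`{p_φ,p_θ} = α e^{iφ−K(θ)}(−K′(θ) p_φ − i p_θ)` with `K′ = h/g`. -/
noncomputable def piGor (g h K : ℝ → ℝ) (α : ℂ) (z : Fin 4 → ℝ) :
    Matrix (Fin 4) (Fin 4) ℂ :=
  skewC
    (-((g (z 1) / (2 * h (z 1)) : ℝ) : ℂ) * pdC 2 (Fgh g h) z)
    (α * Complex.exp (Complex.I * (z 0 : ℂ) - (K (z 1) : ℂ)))
    (-(Complex.I / 2) * (pdC 1 (Fgh g h) z + ((2 * h (z 1) / g (z 1) : ℝ) : ℂ) * Fgh g h z))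
    0
    (Fgh g h z + α * Complex.exp (Complex.I * (z 0 : ℂ) - (K (z 1) : ℂ)))
    (α * Complex.exp (Complex.I * (z 0 : ℂ) - (K (z 1) : ℂ)) *
      (-((h (z 1) / g (z 1) : ℝ) : ℂ) * (z 2 : ℂ) - Complex.I * (z 3 : ℂ)))

/-- `f` is differentiable at `z` with partial derivatives `d`. -/
def HasP (f : (Fin 4 → ℝ) → ℂ) (z : Fin 4 → ℝ) (d : Fin 4 → ℂ) : Prop :=
  DifferentiableAt ℝ f z ∧ ∀ i, pdC i f z = d i

theorem HasP.add {f g : (Fin 4 → ℝ) → ℂ} {z : Fin 4 → ℝ} {d e : Fin 4 → ℂ}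
    (hf : HasP f z d) (hg : HasP g z e) :
    HasP (fun w => f w + g w) z (fun i => d i + e i) := by
  refine ⟨hf.1.add hg.1, fun i => ?_⟩
  beta_reduce
  rw [← hf.2 i, ← hg.2 i]
  simp only [pdC]
  rw [(hf.1.hasFDerivAt.fun_add hg.1.hasFDerivAt).fderiv]
  simp

theorem HasP.mul {f g : (Fin 4 → ℝ) → ℂ} {z : Fin 4 → ℝ} {d e : Fin 4 → ℂ}
    (hf : HasP f z d) (hg : HasP g z e) :
    HasP (fun w => f w * g w) z (fun i => f z * e i + d i * g z) := by
  refine ⟨hf.1.mul hg.1, fun i => ?_⟩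
  beta_reduce
  rw [← hf.2 i, ← hg.2 i]
  simp only [pdC]
  rw [(hf.1.hasFDerivAt.fun_mul hg.1.hasFDerivAt).fderiv]
  simp [mul_comm]

theorem HasP.const (a : ℂ) (z : Fin 4 → ℝ) : HasP (fun _ => a) z (fun _ => 0) := by
  refine ⟨differentiableAt_const _, fun i => ?_⟩
  simp [pdC]

theorem HasP.cexp {f : (Fin 4 → ℝ) → ℂ} {z : Fin 4 → ℝ} {d : Fin 4 → ℂ}
    (hf : HasP f z d) :
    HasP (fun w => Complex.exp (f w)) z (fun i => Complex.exp (f z) * d i) := by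
  refine ⟨hf.1.cexp, fun i => ?_⟩
  beta_reduce
  rw [← hf.2 i]
  simp only [pdC]
  rw [hf.1.hasFDerivAt.cexp.fderiv]
  simp

theorem HasP.comp {u : ℝ → ℝ} {du : ℝ} (j : Fin 4) {z : Fin 4 → ℝ}
    (hu : HasDerivAt u du (z j)) :
    HasP (fun w => (u (w j) : ℂ)) z (fun i => if i = j then (du : ℂ) else 0) := by
  have h1 : HasFDerivAt (fun w : Fin 4 → ℝ => w j)
      (ContinuousLinearMap.proj (R := ℝ) (φ := fun _ : Fin 4 => ℝ) j) z :=
    (ContinuousLinearMap.proj (R := ℝ) (φ := fun _ : Fin 4 => ℝ) j).hasFDerivAt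
  have h2 := hu.ofReal_comp.hasFDerivAt.comp z h1
  refine ⟨h2.differentiableAt, fun i => ?_⟩
  have h3 := h2.fderiv
  have h4 : pdC i (fun w => (u (w j) : ℂ)) z
      = fderiv ℝ ((fun y => (u y : ℂ)) ∘ fun w : Fin 4 → ℝ => w j) z (Pi.single i 1) := rfl
  rw [h4, h3]
  by_cases hij : i = j
  · subst hij; simp
  · simp [hij, Pi.single_apply, Ne.symm hij]

theorem HasP.coord (j : Fin 4) (z : Fin 4 → ℝ) :
    HasP (fun w => (w j : ℂ)) z (fun i => if i = j then 1 else 0) := by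
  simpa using HasP.comp j (hasDerivAt_id (z j))

theorem HasP.congr {f g : (Fin 4 → ℝ) → ℂ} {z : Fin 4 → ℝ} {d e : Fin 4 → ℂ}
    (hf : HasP f z d) (h : g =ᶠ[nhds z] f) (hd : ∀ i, d i = e i) : HasP g z e := by
  refine ⟨hf.1.congr_of_eventuallyEq h, fun i => ?_⟩
  rw [← hd i, ← hf.2 i]
  unfold pdC
  rw [h.fderiv_eq]

/-- Jacobi identity of a skew bivector from its four independent components. -/
theorem jacobi_skew (a b c e f : (Fin 4 → ℝ) → ℂ) (z : Fin 4 → ℝ)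
    (da db dc de df : Fin 4 → ℂ)
    (ha : ∀ i, pdC i a z = da i) (hb : ∀ i, pdC i b z = db i) (hc : ∀ i, pdC i c z = dc i)
    (he : ∀ i, pdC i e z = de i) (hf : ∀ i, pdC i f z = df i)
    (h012 : 0 - a z * db 0 + b z * da 0 + e z * db 3 - f z * da 3 = 0)
    (h013 : 0 - a z * dc 0 + c z * da 0 - a z * de 1 + e z * da 1 - b z * de 2 + f z * da 2 - c z * de 3 + e z * dc 3 = 0)
    (h023 : 0 - b z * dc 0 + c z * db 0 - a z * df 1 + e z * db 1 - b z * df 2 + f z * db 2 - c z * df 3 + f z * dc 3 = 0)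
    (h123 : 0 + a z * df 0 - b z * de 0 - e z * df 3 + f z * de 3 = 0)
    (Pv : (Fin 4 → ℝ) → Matrix (Fin 4) (Fin 4) ℂ)
    (hPv : Pv = fun w => skewC (a w) (b w) (c w) 0 (e w) (f w)) (i j k : Fin 4) :
    (∑ l : Fin 4, (Pv z l i * pdC l (fun w => Pv w j k) z
      + Pv z l j * pdC l (fun w => Pv w k i) z
      + Pv z l k * pdC l (fun w => Pv w i j) z)) = 0 := by
  subst hPv
  have hneg : ∀ (u : (Fin 4 → ℝ) → ℂ) (l : Fin 4), pdC l (fun w => - u w) z = - pdC l u z := by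
    intro u l
    simp [pdC, fderiv_fun_neg]
  have h0 : ∀ l : Fin 4, pdC l (fun _ => (0 : ℂ)) z = 0 := by
    intro l
    simp [pdC]
  fin_cases i <;> fin_cases j <;> fin_cases k <;>
    simp [Fin.sum_univ_four, skewC, hneg, h0, ha, hb, hc, he, hf] <;>
    first
    | ring1
    | linear_combination h012
    | linear_combination -h012
    | linear_combination h013
    | linear_combination -h013
    | linear_combination h023
    | linear_combination -h023
    | linear_combination h123
    | linear_combination -h123

theorem pd_Fgh (g h : ℝ → ℝ) (w : Fin 4 → ℝ) (g1 h1 : ℝ)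
    (hg : HasDerivAt g g1 (w 1)) (hh : HasDerivAt h h1 (w 1)) :
    pdC 1 (Fgh g h) w = 2 * ((g (w 1) : ℂ) * (w 3 : ℂ) - Complex.I * (h (w 1) : ℂ) * (w 2 : ℂ))
        * ((g1 : ℂ) * (w 3 : ℂ) - Complex.I * (h1 : ℂ) * (w 2 : ℂ)) ∧
    pdC 2 (Fgh g h) w = 2 * ((g (w 1) : ℂ) * (w 3 : ℂ) - Complex.I * (h (w 1) : ℂ) * (w 2 : ℂ))
        * (- Complex.I * (h (w 1) : ℂ)) := by
  have hq := (((HasP.comp 1 hg).mul (HasP.coord 3 w)).add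
    (((HasP.const (-Complex.I) w).mul (HasP.comp 1 hh)).mul (HasP.coord 2 w)))
  have hF := hq.mul hq
  have e : Fgh g h = fun w : Fin 4 → ℝ => ((g (w 1) : ℂ) * (w 3 : ℂ)
      + -Complex.I * (h (w 1) : ℂ) * (w 2 : ℂ)) * ((g (w 1) : ℂ) * (w 3 : ℂ)
      + -Complex.I * (h (w 1) : ℂ) * (w 2 : ℂ)) := by
    funext w
    simp only [Fgh]
    ring
  rw [e]
  constructor
  · rw [hF.2 1]
    simp
    ring
  · rw [hF.2 2]
    simp
    ring

/-- Smooth functions on an open interval: two derivatives. -/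
theorem smooth_two {c d : ℝ} {g : ℝ → ℝ} (hg : ContDiffOn ℝ (⊤ : ℕ∞) g (Set.Ioo c d)) :
    ∀ t ∈ Set.Ioo c d, HasDerivAt g (deriv g t) t ∧
      HasDerivAt (deriv g) (deriv (deriv g) t) t := by
  intro t ht
  have hn := isOpen_Ioo.mem_nhds ht
  have h1 : ContDiffOn ℝ 1 (deriv g) (Set.Ioo c d) :=
    hg.deriv_of_isOpen isOpen_Ioo (by norm_cast)
  exact ⟨((hg.contDiffAt hn).differentiableAt (by simp)).hasDerivAt,
    ((h1.contDiffAt hn).differentiableAt (by simp)).hasDerivAt⟩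

/-- The exponential factor `α e^{iφ - K(θ)}`. -/
noncomputable def Eg (K : ℝ → ℝ) (α : ℂ) (w : Fin 4 → ℝ) : ℂ :=
  α * Complex.exp (Complex.I * (w 0 : ℂ) - (K (w 1) : ℂ))

/-- `r = p_θ - i k(θ) p_φ`. -/
noncomputable def rg (k : ℝ → ℝ) (w : Fin 4 → ℝ) : ℂ :=
  (w 3 : ℂ) + -Complex.I * ((k (w 1) : ℂ) * (w 2 : ℂ))

theorem hasP_Eg (K : ℝ → ℝ) (α : ℂ) (z : Fin 4 → ℝ) (k : ℝ) (hK : HasDerivAt K k (z 1)) :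
    HasP (Eg K α) z ![Complex.I * Eg K α z, -k * Eg K α z, 0, 0] := by
  have := (HasP.const α z).mul ((((HasP.const Complex.I z).mul (HasP.coord 0 z)).add
    ((HasP.const (-1) z).mul (HasP.comp 1 hK))).cexp)
  refine this.congr (Filter.Eventually.of_forall fun w => ?_) fun i => ?_
  · simp [Eg, sub_eq_add_neg]
  · fin_cases i <;> simp [Eg, sub_eq_add_neg] <;> ring

theorem hasP_rg (k : ℝ → ℝ) (z : Fin 4 → ℝ) (k1 : ℝ) (hk : HasDerivAt k k1 (z 1)) :
    HasP (rg k) z ![0, -Complex.I * (k1 * z 2), -Complex.I * k (z 1), 1] := by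
  have := (HasP.coord 3 z).add ((HasP.const (-Complex.I) z).mul
    ((HasP.comp 1 hk).mul (HasP.coord 2 z)))
  refine this.congr (Filter.Eventually.of_forall fun w => ?_) fun i => ?_
  · simp [rg]
  · fin_cases i <;> simp

/-- Explicit form of the bivector `π′` on the domain. -/
theorem piGor_explicit (c d : ℝ) (g h K k : ℝ → ℝ) (α : ℂ)
    (hg : ContDiffOn ℝ (⊤ : ℕ∞) g (Set.Ioo c d)) (hk : ContDiffOn ℝ (⊤ : ℕ∞) k (Set.Ioo c d))
    (hg0 : ∀ t ∈ Set.Ioo c d, g t ≠ 0) (hh0 : ∀ t ∈ Set.Ioo c d, h t ≠ 0)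
    (hkd : ∀ t ∈ Set.Ioo c d, h t = g t * k t)
    (w : Fin 4 → ℝ) (hw : w 1 ∈ Set.Ioo c d) :
    piGor g h K α w = skewC
      (Complex.I * ((g (w 1) : ℂ) * ((g (w 1) : ℂ) * rg k w)))
      (Eg K α w)
      (-Complex.I * (((g (w 1) : ℂ) * rg k w) * (((deriv g (w 1) : ℝ) : ℂ) * rg k w
        + ((g (w 1) : ℂ) * (-Complex.I * (((deriv k (w 1) : ℝ) : ℂ) * (w 2 : ℂ))
          + (k (w 1) : ℂ) * rg k w)))))
      0
      (((g (w 1) : ℂ) * rg k w) * ((g (w 1) : ℂ) * rg k w) + Eg K α w)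
      (-Complex.I * (Eg K α w * rg k w)) := by
  have g1 := (smooth_two hg _ hw).1
  have k1 := (smooth_two hk _ hw).1
  have h1 : HasDerivAt h _ (w 1) := (g1.mul k1).congr_of_eventuallyEq (by
    filter_upwards [isOpen_Ioo.mem_nhds hw] with t ht
    simpa using hkd t ht)
  obtain ⟨e1, e2⟩ := pd_Fgh g h w _ _ g1 h1
  have hgw : (g (w 1) : ℂ) ≠ 0 := by exact_mod_cast hg0 _ hw
  have hkw : (k (w 1) : ℂ) ≠ 0 := by
    have := hh0 _ hw
    rw [hkd _ hw] at this
    exact_mod_cast right_ne_zero_of_mul this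
  have hI : Complex.I ^ 2 = -1 := Complex.I_sq
  unfold piGor
  rw [e1, e2]
  simp only [Fgh, hkd _ hw]
  congr 1
  · push_cast
    simp only [rg]
    field_simp
    ring
  · push_cast
    simp only [rg]
    field_simp
    ring
  · simp only [Eg, rg]
    push_cast
    ring
  · simp only [Eg, rg]
    push_cast
    field_simp
    linear_combination (-α * (k (w 1) : ℂ) * (w 2 : ℂ)) * hI

theorem main_aux_s7 (c d : ℝ) (g h K k : ℝ → ℝ) (α s : ℂ)
    (hg : ContDiffOn ℝ (⊤ : ℕ∞) g (Set.Ioo c d)) (hk : ContDiffOn ℝ (⊤ : ℕ∞) k (Set.Ioo c d))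
    (hK : ∀ t ∈ Set.Ioo c d, HasDerivAt K (k t) t)
    (Pv : (Fin 4 → ℝ) → Matrix (Fin 4) (Fin 4) ℂ)
    (hPv : ∀ w : Fin 4 → ℝ, w 1 ∈ Set.Ioo c d → Pv w = skewC
      (Complex.I * ((g (w 1) : ℂ) * ((g (w 1) : ℂ) * rg k w)))
      (Eg K α w + s)
      (-Complex.I * (((g (w 1) : ℂ) * rg k w) * (((deriv g (w 1) : ℝ) : ℂ) * rg k w
        + ((g (w 1) : ℂ) * (-Complex.I * (((deriv k (w 1) : ℝ) : ℂ) * (w 2 : ℂ))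
          + (k (w 1) : ℂ) * rg k w)))))
      0
      (((g (w 1) : ℂ) * rg k w) * ((g (w 1) : ℂ) * rg k w) + Eg K α w + s)
      (-Complex.I * (Eg K α w * rg k w))) :
    IsPoissonOnC Pv {z | z 1 ∈ Set.Ioo c d} := by
  intro z hz i j l
  have hz1 : z 1 ∈ Set.Ioo c d := hz
  have hev : ∀ᶠ w : Fin 4 → ℝ in nhds z, w 1 ∈ Set.Ioo c d :=
    (continuous_apply 1).continuousAt.eventually (isOpen_Ioo.mem_nhds hz1)
  obtain ⟨g1, g2⟩ := smooth_two hg _ hz1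
  obtain ⟨k1, k2⟩ := smooth_two hk _ hz1
  have pE := hasP_Eg K α z _ (hK _ hz1)
  have pr := hasP_rg k z _ k1
  have pg := HasP.comp 1 g1
  have pk := HasP.comp 1 k1
  have pg1 := HasP.comp 1 g2
  have pk1 := HasP.comp 1 k2
  have pI := HasP.const Complex.I z
  have pnI := HasP.const (-Complex.I) z
  have ps := HasP.const s z
  have pgr := pg.mul pr
  have pa := pI.mul (pg.mul pgr)
  have pb := pE.add ps
  have pc := pnI.mul (pgr.mul ((pg1.mul pr).add (pg.mul
    ((pnI.mul (pk1.mul (HasP.coord 2 z))).add (pk.mul pr)))))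
  have pe := ((pgr.mul pgr).add pE).add ps
  have pf := pnI.mul (pE.mul pr)
  have hI : Complex.I ^ 2 = -1 := Complex.I_sq
  have key := jacobi_skew _ _ _ _ _ z _ _ _ _ _ pa.2 pb.2 pc.2 pe.2 pf.2
    (by
      simp [rg]
      generalize Eg K α z = E
      generalize Complex.I = J at hI ⊢
      grind)
    (by
      simp [rg]
      generalize Eg K α z = E
      generalize Complex.I = J at hI ⊢
      grind)
    (by
      simp [rg]
      generalize Eg K α z = E
      generalize Complex.I = J at hI ⊢
      grind)
    (by
      simp [rg]
      generalize Eg K α z = E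
      generalize Complex.I = J at hI ⊢
      grind) _ rfl i j l
  have hval := hPv z hz1
  have hder : ∀ m p q, pdC m (fun w => Pv w p q) z = _ := fun m p q => by
    unfold pdC
    exact congrArg (fun L => L (Pi.single m 1)) (Filter.EventuallyEq.fderiv_eq (𝕜 := ℝ)
      (hev.mono fun w hw => congrFun (congrFun (hPv w hw) p) q))
  simp only [hder, hval]
  exact key

theorem statement7 (c d : ℝ) (g h K : ℝ → ℝ) (α : ℂ)
    (hg : ContDiffOn ℝ (⊤ : ℕ∞) g (Set.Ioo c d)) (hh : ContDiffOn ℝ (⊤ : ℕ∞) h (Set.Ioo c d))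
    (hg0 : ∀ t ∈ Set.Ioo c d, g t ≠ 0) (hh0 : ∀ t ∈ Set.Ioo c d, h t ≠ 0)
    (hK : ∀ t ∈ Set.Ioo c d, HasDerivAt K (h t / g t) t) :
    IsPoissonOnC (piGor g h K α) {z | z 1 ∈ Set.Ioo c d} ∧
    IsPoissonOnC (fun z => PcanC + piGor g h K α z) {z | z 1 ∈ Set.Ioo c d} := by
  have hk : ContDiffOn ℝ (⊤ : ℕ∞) (fun t => h t / g t) (Set.Ioo c d) := hh.div hg hg0
  have hkd : ∀ t ∈ Set.Ioo c d, h t = g t * (fun t => h t / g t) t := by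
    intro t ht
    have := hg0 t ht
    field_simp
  have hex := piGor_explicit c d g h K _ α hg hk hg0 hh0 hkd
  constructor
  · refine main_aux_s7 c d g h K _ α 0 hg hk hK _ fun w hw => ?_
    rw [hex w hw]
    simp only [add_zero]
  · refine main_aux_s7 c d g h K _ α 1 hg hk hK _ fun w hw => ?_
    rw [hex w hw]
    ext p q
    fin_cases p <;> fin_cases q <;> simp [PcanC, skewC] <;> ring
end

section
/- Let g, h be smooth nowhere-vanishing real functions of θ on an open interval I, let G and K be smooth functions on I with G′ = 1/g and K′ = h/g, let α ∈ ℂ, i = √(−1). For λ ∈ ℂ, λ ≠ 0, define the complex-valued functions 𝓑(λ) = λ² − i(g(θ) p_θ − i h(θ) p_φ)·λ + α e^{iφ − K(θ)} and 𝓐(λ) = i G(θ) − i p_φ/λ on ℝ × I × ℝ². Then with respect to the canonical Poisson bracket (extended ℂ-bilinearly): {𝓑(λ), 𝓐(μ)} = (λ/(μ−λ))·(𝓑(λ)/λ − 𝓑(μ)/μ) for all nonzero λ ≠ μ, and {𝓐(λ), 𝓐(μ)} = 0 for all nonzero λ, μ. -/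
open Real Complex

/-- The canonical Poisson bracket, extended ℂ-bilinearly to complex-valued functions. -/
noncomputable def pbC (F G : (Fin 4 → ℝ) → ℂ) (z : Fin 4 → ℝ) : ℂ :=
  pdC 0 F z * pdC 2 G z - pdC 2 F z * pdC 0 G z
    + pdC 1 F z * pdC 3 G z - pdC 3 F z * pdC 1 G z

/-- `𝓑(λ) = λ² − i(g(θ) p_θ − i h(θ) p_φ)·λ + α e^{iφ − K(θ)}`. -/
noncomputable def BB (g h K : ℝ → ℝ) (α l : ℂ) (z : Fin 4 → ℝ) : ℂ :=
  l ^ 2 - Complex.I * ((g (z 1) : ℂ) * (z 3 : ℂ) - Complex.I * (h (z 1) : ℂ) * (z 2 : ℂ)) * l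
    + α * Complex.exp (Complex.I * (z 0 : ℂ) - (K (z 1) : ℂ))

/-- `𝓐(λ) = i G(θ) − i p_φ/λ`. -/
noncomputable def AA (G : ℝ → ℝ) (l : ℂ) (z : Fin 4 → ℝ) : ℂ :=
  Complex.I * (G (z 1) : ℂ) - Complex.I * (z 2 : ℂ) / l

/-- The derivative of a coordinate, composed with a real function and cast to `ℂ`. -/
lemma hasFDerivAt_coord (i : Fin 4) (f : ℝ → ℝ) (f' : ℝ) (z : Fin 4 → ℝ)
    (hf : HasDerivAt f f' (z i)) :
    HasFDerivAt (fun w : Fin 4 → ℝ => ((f (w i) : ℝ) : ℂ))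
      ((ContinuousLinearMap.proj (R := ℝ) (φ := fun _ : Fin 4 => ℝ) i).smulRight (f' : ℂ)) z := by
  have h1 : HasFDerivAt (fun w : Fin 4 → ℝ => w i)
      (ContinuousLinearMap.proj (R := ℝ) (φ := fun _ : Fin 4 => ℝ) i) z :=
    (ContinuousLinearMap.proj (R := ℝ) (φ := fun _ : Fin 4 => ℝ) i).hasFDerivAt
  have h2 := Complex.ofRealCLM.hasFDerivAt.comp z (hf.comp_hasFDerivAt z h1)
  refine h2.congr_fderiv ?_
  ext v
  simp [mul_comm]

lemma hasFDerivAt_AA (G : ℝ → ℝ) (G' : ℝ) (l : ℂ) (z : Fin 4 → ℝ)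
    (hG : HasDerivAt G G' (z 1)) (i : Fin 4) :
    pdC i (AA G l) z = Complex.I * (if i = 1 then (G' : ℂ) else 0)
      - Complex.I * (if i = 2 then 1 else 0) / l := by
  have h1 := (hasFDerivAt_coord 1 G G' z hG).const_mul Complex.I
  have h2 := ((hasFDerivAt_coord 2 (fun t => t) 1 z (hasDerivAt_id _)).const_mul
    Complex.I).mul_const l⁻¹
  have h3 : HasFDerivAt (AA G l) _ z := h1.sub h2
  unfold pdC
  rw [h3.fderiv]
  fin_cases i <;> simp [div_eq_mul_inv, mul_comm]

lemma hasFDerivAt_BB (g h K : ℝ → ℝ) (g' h' K' : ℝ) (α l : ℂ) (z : Fin 4 → ℝ)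
    (hg : HasDerivAt g g' (z 1)) (hh : HasDerivAt h h' (z 1)) (hK : HasDerivAt K K' (z 1)) :
    pdC 0 (BB g h K α l) z
        = α * (Complex.I * Complex.exp (Complex.I * (z 0 : ℂ) - (K (z 1) : ℂ))) ∧
      pdC 3 (BB g h K α l) z = - Complex.I * g (z 1) * l := by
  have hg1 := hasFDerivAt_coord 1 g g' z hg
  have hh1 := hasFDerivAt_coord 1 h h' z hh
  have hK1 := hasFDerivAt_coord 1 K K' z hK
  have c0 := hasFDerivAt_coord 0 (fun t => t) 1 z (hasDerivAt_id _)
  have c2 := hasFDerivAt_coord 2 (fun t => t) 1 z (hasDerivAt_id _)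
  have c3 := hasFDerivAt_coord 3 (fun t => t) 1 z (hasDerivAt_id _)
  have h3 : HasFDerivAt (BB g h K α l) _ z :=
    (((((hg1.mul c3).sub ((hh1.const_mul Complex.I).mul c2)).const_mul Complex.I).mul_const
      l).const_sub (l ^ 2)).add ((((c0.const_mul Complex.I).sub hK1).cexp).const_mul α)
  unfold pdC
  rw [h3.fderiv]
  constructor
  · simp [mul_comm]
  · simp
    try ring

theorem statement8 (c d : ℝ) (g h G K : ℝ → ℝ) (α : ℂ)
    (hg : ContDiffOn ℝ (⊤ : ℕ∞) g (Set.Ioo c d)) (hh : ContDiffOn ℝ (⊤ : ℕ∞) h (Set.Ioo c d))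
    (hg0 : ∀ t ∈ Set.Ioo c d, g t ≠ 0) (hh0 : ∀ t ∈ Set.Ioo c d, h t ≠ 0)
    (hG : ∀ t ∈ Set.Ioo c d, HasDerivAt G (1 / g t) t)
    (hK : ∀ t ∈ Set.Ioo c d, HasDerivAt K (h t / g t) t) :
    (∀ l m : ℂ, l ≠ 0 → m ≠ 0 → l ≠ m → ∀ z : Fin 4 → ℝ, z 1 ∈ Set.Ioo c d →
      pbC (BB g h K α l) (AA G m) z
        = l / (m - l) * (BB g h K α l z / l - BB g h K α m z / m)) ∧
    (∀ l m : ℂ, l ≠ 0 → m ≠ 0 → ∀ z : Fin 4 → ℝ, z 1 ∈ Set.Ioo c d →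
      pbC (AA G l) (AA G m) z = 0) := by
  constructor
  · intro l m hl hm hlm z hz
    have hn : Set.Ioo c d ∈ nhds (z 1) := isOpen_Ioo.mem_nhds hz
    have dg := ((hg.contDiffAt hn).differentiableAt (by simp)).hasDerivAt
    have dh := ((hh.contDiffAt hn).differentiableAt (by simp)).hasDerivAt
    obtain ⟨b0, b3⟩ := hasFDerivAt_BB g h K _ _ _ α l z dg dh (hK _ hz)
    have a := hasFDerivAt_AA G _ m z (hG _ hz)
    have hml : m - l ≠ 0 := sub_ne_zero.mpr (Ne.symm hlm)
    have hgz : (g (z 1) : ℂ) ≠ 0 := by exact_mod_cast hg0 _ hz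
    unfold pbC
    rw [b0, b3, a 0, a 1, a 2, a 3]
    unfold BB
    generalize Complex.exp (Complex.I * (z 0 : ℂ) - (K (z 1) : ℂ)) = E
    simp
    field_simp
    ring_nf
    simp only [Complex.I_sq]
    ring
  · intro l m hl hm z hz
    unfold pbC
    simp [hasFDerivAt_AA G _ _ z (hG _ hz)]
end

section
/- Let a, b, c be real parameters and let x_i, J_i be the spherical realization on the domain where sin θ ≠ 0 and cos θ ≠ 0. Define the Goryachev–Chaplygin gyrostat integrals H₁ = J₁² + J₂² + 4J₃² + 2c J₃ + b x₁ + a/x₃² and H₂ = (2J₃ + c)(J₁² + J₂² + a/x₃²) − b x₃ J₁. Then {H₁, H₂} = 0 with respect to the canonical Poisson bracket. -/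
open Real

/-- The canonical Poisson bracket on functions of `(φ, θ, p_φ, p_θ)`. -/
noncomputable def pb (F G : (Fin 4 → ℝ) → ℝ) (z : Fin 4 → ℝ) : ℝ :=
  pd 0 F z * pd 2 G z - pd 2 F z * pd 0 G z + pd 1 F z * pd 3 G z - pd 3 F z * pd 1 G z

noncomputable def x1 (z : Fin 4 → ℝ) : ℝ := sin (z 0) * sin (z 1)
noncomputable def x3 (z : Fin 4 → ℝ) : ℝ := cos (z 1)
noncomputable def J1 (z : Fin 4 → ℝ) : ℝ := sin (z 0) * cos (z 1) / sin (z 1) * z 2 - cos (z 0) * z 3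
noncomputable def J2 (z : Fin 4 → ℝ) : ℝ := cos (z 0) * cos (z 1) / sin (z 1) * z 2 + sin (z 0) * z 3
noncomputable def J3 (z : Fin 4 → ℝ) : ℝ := -(z 2)

theorem statement14 (a b c : ℝ) (z : Fin 4 → ℝ)
    (hs : sin (z 1) ≠ 0) (hc : cos (z 1) ≠ 0) :
    pb (fun w => J1 w ^ 2 + J2 w ^ 2 + 4 * J3 w ^ 2 + 2 * c * J3 w + b * x1 w + a / x3 w ^ 2)
      (fun w => (2 * J3 w + c) * (J1 w ^ 2 + J2 w ^ 2 + a / x3 w ^ 2) - b * x3 w * J1 w)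
      z = 0 := by
  have hp : ∀ i : Fin 4, HasFDerivAt (fun w : Fin 4 → ℝ => w i)
      (ContinuousLinearMap.proj (R := ℝ) (φ := fun _ : Fin 4 => ℝ) i) z :=
    fun i => hasFDerivAt_apply i z
  have hinv := (hasDerivAt_inv hs).comp_hasFDerivAt z (hp 1).sin
  have hcinv := (hasDerivAt_inv (pow_ne_zero 2 hc)).comp_hasFDerivAt z ((hp 1).cos.pow 2)
  have h1 := ((((hp 0).sin.mul (hp 1).cos).mul hinv).mul (hp 2)).sub ((hp 0).cos.mul (hp 3))
  have h2 := ((((hp 0).cos.mul (hp 1).cos).mul hinv).mul (hp 2)).add ((hp 0).sin.mul (hp 3))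
  have h3 := (hp 2).neg
  have hA := ((h1.pow 2).add (h2.pow 2))
  have hF := ((((hA.add ((h3.pow 2).const_mul 4)).add (h3.const_mul (2 * c))).add
    (((hp 0).sin.mul (hp 1).sin).const_mul b)).add (hcinv.const_mul a))
  have hG := (((h3.const_mul 2).add_const c).mul (hA.add (hcinv.const_mul a))).sub
    (((hp 1).cos.const_mul b).mul h1)
  have eF := HasFDerivAt.fderiv (f := fun w => J1 w ^ 2 + J2 w ^ 2 + 4 * J3 w ^ 2 + 2 * c * J3 w + b * x1 w + a / x3 w ^ 2) hF
  have eG := HasFDerivAt.fderiv (f := fun w => (2 * J3 w + c) * (J1 w ^ 2 + J2 w ^ 2 + a / x3 w ^ 2) - b * x3 w * J1 w) hG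
  unfold pb pd
  rw [eF, eG]
  clear eF eG hF hG hA h3 h2 h1 hcinv hinv hp
  have q0 := sin_sq_add_cos_sq (z 0)
  have q1 := sin_sq_add_cos_sq (z 1)
  simp
  generalize sin (z 0) = s at *
  generalize cos (z 0) = k at *
  generalize sin (z 1) = S at *
  generalize cos (z 1) = C at *
  generalize z 2 = p at *
  generalize z 3 = q at *
  field_simp
  grind
end

section
/- Let α ≠ 0 and a be real parameters and work on a domain where sin αθ cos αθ ≠ 0. Define Π₁₁ = p_θ² + p_φ²(4 + 3 cos²αθ/sin²αθ), Π₁₂ = Π₂₁ = 2 p_φ p_θ, Π₂₂ = p_θ² − p_φ² cos²αθ/sin²αθ, and Λ = (a/cos²αθ)·I₂. Set x₂₂ = y₁₂ = −cos αθ sin αθ/α and x₂₁ = y₁₁ = 0. Define the bivector π′ by {φ,θ}_{π′} = x₂₁ ∂Π₂₁/∂p_φ + x₂₂ ∂Π₂₂/∂p_φ − y₁₁ ∂Π₁₁/∂p_θ − y₁₂ ∂Π₁₂/∂p_θ, {q_i,p_j}_{π′} = Π_{ij} + Λ_{ij} (where (q₁,q₂,p₁,p₂) = (φ,θ,p_φ,p_θ)),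 and {p_φ,p_θ}_{π′} = (1/3)[(∂Π₁₁/∂θ − ∂Π₁₂/∂φ) p_φ + (∂Π₂₁/∂θ − ∂Π₂₂/∂φ) p_θ] + (∂Λ₁₁/∂θ − ∂Λ₁₂/∂φ) p_φ + (∂Λ₂₁/∂θ − ∂Λ₂₂/∂φ) p_θ. Then π′ is a Poisson bivector compatible with the canonical bivector P. -/
open Real

noncomputable def Pi11 (α : ℝ) (z : Fin 4 → ℝ) : ℝ :=
  z 3 ^ 2 + z 2 ^ 2 * (4 + 3 * cos (α * z 1) ^ 2 / sin (α * z 1) ^ 2)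

noncomputable def Pi12 (z : Fin 4 → ℝ) : ℝ := 2 * z 2 * z 3

noncomputable def Pi21 (z : Fin 4 → ℝ) : ℝ := 2 * z 2 * z 3

noncomputable def Pi22 (α : ℝ) (z : Fin 4 → ℝ) : ℝ :=
  z 3 ^ 2 - z 2 ^ 2 * cos (α * z 1) ^ 2 / sin (α * z 1) ^ 2

noncomputable def La11 (α a : ℝ) (z : Fin 4 → ℝ) : ℝ := a / cos (α * z 1) ^ 2

noncomputable def La12 (z : Fin 4 → ℝ) : ℝ := 0

noncomputable def La21 (z : Fin 4 → ℝ) : ℝ := 0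

noncomputable def La22 (α a : ℝ) (z : Fin 4 → ℝ) : ℝ := a / cos (α * z 1) ^ 2

/-- `x₂₂ = y₁₂ = −cos αθ sin αθ/α`. -/
noncomputable def x22y12 (α : ℝ) (z : Fin 4 → ℝ) : ℝ :=
  -(cos (α * z 1) * sin (α * z 1)) / α

/-- The natural Poisson bivector `π′` of the Goryachev–Chaplygin top:
`{φ,θ} = x₂₁ ∂Π₂₁/∂p_φ + x₂₂ ∂Π₂₂/∂p_φ − y₁₁ ∂Π₁₁/∂p_θ − y₁₂ ∂Π₁₂/∂p_θ`,
`{q_i,p_j} = Π_{ij} + Λ_{ij}`,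
`{p_φ,p_θ} = (1/3)[(∂Π₁₁/∂θ − ∂Π₁₂/∂φ) p_φ + (∂Π₂₁/∂θ − ∂Π₂₂/∂φ) p_θ]
  + (∂Λ₁₁/∂θ − ∂Λ₁₂/∂φ) p_φ + (∂Λ₂₁/∂θ − ∂Λ₂₂/∂φ) p_θ`, with `x₂₁ = y₁₁ = 0`. -/
noncomputable def piGC (α a : ℝ) (z : Fin 4 → ℝ) : Matrix (Fin 4) (Fin 4) ℝ :=
  skew
    (0 * pd 2 Pi21 z + x22y12 α z * pd 2 (Pi22 α) z
      - 0 * pd 3 (Pi11 α) z - x22y12 α z * pd 3 Pi12 z)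
    (Pi11 α z + La11 α a z)
    (Pi12 z + La12 z)
    (Pi21 z + La21 z)
    (Pi22 α z + La22 α a z)
    ((1 / 3) * ((pd 1 (Pi11 α) z - pd 0 Pi12 z) * z 2
        + (pd 1 Pi21 z - pd 0 (Pi22 α)  z) * z 3)
      + (pd 1 (La11 α a) z - pd 0 La12 z) * z 2
      + (pd 1 La21 z - pd 0 (La22 α a) z) * z 3)

/-- `F` has gradient `d` at `z`. -/
def HP (F : (Fin 4 → ℝ) → ℝ) (z : Fin 4 → ℝ) (d : Fin 4 → ℝ) : Prop :=
  HasFDerivAt F (∑ i, d i • (ContinuousLinearMap.proj (R := ℝ) (φ := fun _ : Fin 4 => ℝ) i)) z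

theorem HP.pd {F z d} (h : HP F z d) (i : Fin 4) : pd i F z = d i := by
  unfold HP at h
  rw [_root_.pd, h.fderiv]
  simp [Pi.single_apply]

theorem HP.congr {F G z d} (h : HP F z d) (e : G =ᶠ[nhds z] F) : HP G z d :=
  HasFDerivAt.congr_of_eventuallyEq h e

theorem HP.const (c : ℝ) (z) : HP (fun _ => c) z (fun _ => 0) := by
  unfold HP
  simpa using hasFDerivAt_const c z

theorem HP.coord (i : Fin 4) (z) : HP (fun w => w i) z (Pi.single i 1) := by
  unfold HP
  refine (ContinuousLinearMap.proj (R := ℝ) (φ := fun _ : Fin 4 => ℝ) i).hasFDerivAt.congr_fderiv ?_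
  ext v
  simp [Pi.single_apply]

theorem HP.add {F G z d e} (h : HP F z d) (k : HP G z e) :
    HP (fun w => F w + G w) z (fun i => d i + e i) := by
  unfold HP at *
  refine (HasFDerivAt.add h k).congr_fderiv ?_
  simp [add_smul, Finset.sum_add_distrib]

theorem HP.mul {F G z d e} (h : HP F z d) (k : HP G z e) :
    HP (fun w => F w * G w) z (fun i => F z * e i + G z * d i) := by
  unfold HP at *
  refine (HasFDerivAt.mul h k).congr_fderiv ?_
  simp [add_smul, mul_smul, Finset.sum_add_distrib, Finset.smul_sum]

theorem HP.comp {g : ℝ → ℝ} {g' : ℝ} {F z d} (h : HP F z d) (k : HasDerivAt g g' (F z)) :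
    HP (fun w => g (F w)) z (fun i => g' * d i) := by
  unfold HP at *
  refine (HasDerivAt.comp_hasFDerivAt z k h).congr_fderiv ?_
  simp [mul_smul, Finset.smul_sum]

/-- the domain -/
def UU (α : ℝ) : Set (Fin 4 → ℝ) := {z | sin (α * z 1) * cos (α * z 1) ≠ 0}

theorem UU_nhds {α z} (hz : z ∈ UU α) : ∀ᶠ w in nhds z, w ∈ UU α := by
  apply IsOpen.mem_nhds _ hz
  apply isOpen_ne_fun <;> fun_prop

/-- tangent -/
noncomputable def uu (α : ℝ) (z : Fin 4 → ℝ) : ℝ := tan (α * z 1)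

theorem uu_ne {α z} (hz : z ∈ UU α) : uu α z ≠ 0 := by
  unfold uu UU at *
  simp only [Set.mem_ofPred_eq, mul_ne_zero_iff] at hz
  rw [tan_eq_sin_div_cos]
  exact div_ne_zero hz.1 hz.2

theorem sec_eq {α z} (hz : z ∈ UU α) : 1 / cos (α * z 1) ^ 2 = 1 + uu α z ^ 2 := by
  unfold uu UU at *
  simp only [Set.mem_ofPred_eq, mul_ne_zero_iff] at hz
  rw [tan_eq_sin_div_cos]
  have := hz.2
  field_simp
  linarith [sin_sq_add_cos_sq (α * z 1)]

theorem cs_eq {α z} (hz : z ∈ UU α) :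
    cos (α * z 1) * sin (α * z 1) = uu α z / (1 + uu α z ^ 2) := by
  rw [← sec_eq hz]
  unfold uu UU at *
  simp only [Set.mem_ofPred_eq, mul_ne_zero_iff] at hz
  rw [tan_eq_sin_div_cos]
  have := hz.2
  field_simp

theorem cot_eq (α z) : cos (α * z 1) ^ 2 / sin (α * z 1) ^ 2 = (uu α z)⁻¹ ^ 2 := by
  unfold uu
  rw [tan_eq_sin_div_cos, inv_div, div_pow]

theorem HP.uu {α z} (hz : z ∈ UU α) :
    HP (uu α) z (fun i => α * (1 + uu α z ^ 2) * (Pi.single 1 1 : Fin 4 → ℝ) i) := by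
  have h := hz
  unfold UU at h
  simp only [Set.mem_ofPred_eq, mul_ne_zero_iff] at h
  refine HP.comp (g := fun t => tan (α * t)) (HP.coord 1 z) ?_
  have := (hasDerivAt_tan h.2).comp (z 1) ((hasDerivAt_id (z 1)).const_mul α)
  refine HasDerivAt.congr_deriv this ?_
  rw [sec_eq hz]
  ring

theorem HP.vv {α z} (hz : z ∈ UU α) :
    HP (fun w => (_root_.uu α w)⁻¹) z (fun i => -(_root_.uu α z ^ 2)⁻¹ *
      (α * (1 + _root_.uu α z ^ 2) * (Pi.single 1 1 : Fin 4 → ℝ) i)) :=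
  HP.comp (g := fun t => t⁻¹) (HP.uu hz) (hasDerivAt_inv (uu_ne hz))

theorem HP.sq {F z d} (h : HP F z d) : HP (fun w => F w ^ 2) z (fun i => 2 * F z * d i) := by
  convert h.mul h using 2
  · ring
  · ring

noncomputable def eA (α : ℝ) (z : Fin 4 → ℝ) : ℝ := (2 / α) * (z 2 * (uu α z)⁻¹)
noncomputable def e11 (α : ℝ) (z : Fin 4 → ℝ) : ℝ :=
  z 3 ^ 2 + z 2 ^ 2 * (4 + 3 * (uu α z)⁻¹ ^ 2)
noncomputable def e12 (z : Fin 4 → ℝ) : ℝ := 2 * (z 2 * z 3)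
noncomputable def e22 (α : ℝ) (z : Fin 4 → ℝ) : ℝ :=
  z 3 ^ 2 + (-1) * (z 2 ^ 2 * (uu α z)⁻¹ ^ 2)
noncomputable def eL (α a : ℝ) (z : Fin 4 → ℝ) : ℝ := a * (1 + uu α z ^ 2)
noncomputable def eF (α a : ℝ) (z : Fin 4 → ℝ) : ℝ :=
  (-2 * α) * ((z 2 * z 2 ^ 2) * ((uu α z)⁻¹ * (1 + (uu α z)⁻¹ ^ 2)))
    + (2 * a * α) * (z 2 * (uu α z * (1 + uu α z ^ 2)))

theorem La_eq {α a z} (hz : z ∈ UU α) : La11 α a z = eL α a z := by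
  rw [La11, eL, ← sec_eq hz]; ring

theorem Pi11_eq (α) : Pi11 α = e11 α := by
  funext z; rw [Pi11, e11, ← cot_eq]; ring

theorem Pi22_eq (α) : Pi22 α = e22 α := by
  funext z; rw [Pi22, e22, ← cot_eq]; ring

theorem Pi12_eq : Pi12 = e12 := by
  funext z; rw [Pi12, e12]; ring

theorem Pi21_eq : Pi21 = e12 := by
  funext z; rw [Pi21, e12]; ring

/-- explicit form -/
noncomputable def MM (α a k : ℝ) (z : Fin 4 → ℝ) : Matrix (Fin 4) (Fin 4) ℝ :=
  skew (eA α z) (e11 α z + eL α a z + k) (e12 z) (e12 z) (e22 α z + eL α a z + k) (eF α a z)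

theorem piGC_eq {α a z} (hα : α ≠ 0) (hz : z ∈ UU α) : piGC α a z = MM α a 0 z := by
  have hL : La11 α a =ᶠ[nhds z] eL α a := (UU_nhds hz).mono fun w hw => La_eq hw
  have hLL : La22 α a = La11 α a := rfl
  have h12 : HP e12 z _ := ((HP.const 2 z).mul ((HP.coord 2 z).mul (HP.coord 3 z)))
  have h11 : HP (e11 α) z _ := ((HP.coord 3 z).sq.add ((HP.coord 2 z).sq.mul ((HP.const 4 z).add ((HP.const 3 z).mul (HP.vv hz).sq))))
  have h22 : HP (e22 α) z _ := ((HP.coord 3 z).sq.add ((HP.const (-1) z).mul ((HP.coord 2 z).sq.mul (HP.vv hz).sq)))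
  have h3 := HP.congr ((HP.const a z).mul ((HP.const 1 z).add (HP.uu hz).sq)) hL
  have h0 : HP La12 z _ := HP.const 0 z
  have h0' : HP La21 z _ := HP.const 0 z
  have hu := uu_ne hz
  have hp : 1 + uu α z ^ 2 ≠ 0 := by positivity
  unfold piGC MM
  rw [Pi11_eq, Pi22_eq, Pi12_eq, Pi21_eq, hLL, La_eq hz, x22y12, cs_eq hz]
  simp only [h12.pd, h11.pd, h22.pd, h3.pd, h0.pd, h0'.pd, La12, La21]
  congr 1
  · simp [eA]
    field_simp
    ring
  · ring
  · ring
  · ring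
  · ring
  · simp [eF]
    field_simp
    ring

theorem Pcan_add {α a z} : Pcan + MM α a 0 z = MM α a 1 z := by
  ext i j
  fin_cases i <;> fin_cases j <;> simp [Pcan, MM, skew] <;> ring

theorem HP.neg {F z d} (h : HP F z d) : HP (fun w => - F w) z (fun i => - d i) := by
  convert (HP.const (-1) z).mul h using 2
  · ring
  · ring

set_option maxHeartbeats 4000000 in
theorem poisson_MM (α a k : ℝ) (hα : α ≠ 0) : IsPoissonOn (MM α a k) (UU α) := by
  intro z hz
  have h12 : HP e12 z _ := ((HP.const 2 z).mul ((HP.coord 2 z).mul (HP.coord 3 z)))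
  have hA : HP (eA α) z _ := ((HP.const (2 / α) z).mul ((HP.coord 2 z).mul (HP.vv hz)))
  have hF : HP (eF α a) z _ := (((HP.const (-2 * α) z).mul (((HP.coord 2 z).mul (HP.coord 2 z).sq).mul ((HP.vv hz).mul ((HP.const 1 z).add (HP.vv hz).sq)))).add ((HP.const (2 * a * α) z).mul ((HP.coord 2 z).mul ((HP.uu hz).mul ((HP.const 1 z).add (HP.uu hz).sq)))))
  have h11 : HP (fun z => e11 α z + eL α a z + k) z _ :=
    (((HP.coord 3 z).sq.add ((HP.coord 2 z).sq.mul ((HP.const 4 z).add ((HP.const 3 z).mul (HP.vv hz).sq)))).add ((HP.const a z).mul ((HP.const 1 z).add (HP.uu hz).sq))).add (HP.const k z)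
  have h22 : HP (fun z => e22 α z + eL α a z + k) z _ :=
    (((HP.coord 3 z).sq.add ((HP.const (-1) z).mul ((HP.coord 2 z).sq.mul (HP.vv hz).sq))).add ((HP.const a z).mul ((HP.const 1 z).add (HP.uu hz).sq))).add (HP.const k z)
  have hu := uu_ne hz
  have n12 := h12.neg
  have nA := hA.neg
  have nF := hF.neg
  have n11 := h11.neg
  have n22 := h22.neg
  have h0 := HP.const 0 z
  intro i j k
  rw [Fin.sum_univ_four]
  fin_cases i <;> fin_cases j <;> fin_cases k <;>
    simp only [MM, skew, Matrix.of_apply, Matrix.cons_val', Matrix.cons_val, Fin.zero_eta, Fin.mk_one,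
      Fin.reduceFinMk, Matrix.cons_val_zero, Matrix.cons_val_one] <;>
    simp only [h12.pd, hA.pd, hF.pd, h11.pd, h22.pd, n12.pd, nA.pd, nF.pd, n11.pd, n22.pd, h0.pd] <;>
    simp [eA, eF, e11, e12, e22, eL] <;>
    field_simp <;>
    ring

theorem IsPoissonOn.congr {P Q : (Fin 4 → ℝ) → Matrix (Fin 4) (Fin 4) ℝ} {α : ℝ}
    (h : IsPoissonOn P (UU α)) (e : ∀ z ∈ UU α, Q z = P z) : IsPoissonOn Q (UU α) := by
  intro z hz i j k
  have hh : ∀ l i j, pd l (fun w => Q w i j) z = pd l (fun w => P w i j) z := by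
    intro l i j
    unfold pd
    rw [Filter.EventuallyEq.fderiv_eq]
    exact (UU_nhds hz).mono fun w hw => by simp only [e w hw]
  simp only [hh, e z hz]
  exact h z hz i j k

theorem statement16 (α a : ℝ) (hα : α ≠ 0) :
    IsPoissonOn (piGC α a) {z | sin (α * z 1) * cos (α * z 1) ≠ 0} ∧
    IsPoissonOn (fun z => Pcan + piGC α a z) {z | sin (α * z 1) * cos (α * z 1) ≠ 0} := by
  refine ⟨(poisson_MM α a 0 hα).congr fun z hz => piGC_eq hα hz,
    (poisson_MM α a 1 hα).congr fun z hz => ?_⟩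
  show Pcan + piGC α a z = _
  rw [piGC_eq hα hz, Pcan_add]
end

section
/- Let x_i, J_i be the spherical realization restricted to the domain 0 < φ < π/2, 0 < θ < π/2 (so that x₁, x₂, x₃ > 0). Define the Gaffet system integrals H₁ = J₁² + J₂² + J₃² − (x₁ x₂ x₃)^{−2/3} and H₂ = J₁ J₂ J₃ + (x₂ x₃ J₁ + x₁ x₃ J₂ + x₁ x₂ J₃)·(x₁ x₂ x₃)^{−2/3}. Then {H₁, H₂} = 0 with respect to the canonical Poisson bracket. -/
open Real

noncomputable def x2 (z : Fin 4 → ℝ) : ℝ := cos (z 0) * sin (z 1)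
/-- The Gaffet Hamiltonian `H₁ = J₁² + J₂² + J₃² − (x₁x₂x₃)^{−2/3}`. -/
noncomputable def H1gaf (z : Fin 4 → ℝ) : ℝ :=
  J1 z ^ 2 + J2 z ^ 2 + J3 z ^ 2 - (x1 z * x2 z * x3 z) ^ (-(2 : ℝ) / 3)

/-- The Gaffet cubic integral
`H₂ = J₁J₂J₃ + (x₂x₃J₁ + x₁x₃J₂ + x₁x₂J₃)(x₁x₂x₃)^{−2/3}`. -/
noncomputable def H2gaf (z : Fin 4 → ℝ) : ℝ :=
  J1 z * J2 z * J3 z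
    + (x2 z * x3 z * J1 z + x1 z * x3 z * J2 z + x1 z * x2 z * J3 z)
      * (x1 z * x2 z * x3 z) ^ (-(2 : ℝ) / 3)


/-- Partial derivatives through curves along the coordinate directions. -/
lemma pd_eq_of_hasFDerivAt {F : (Fin 4 → ℝ) → ℝ} {L : (Fin 4 → ℝ) →L[ℝ] ℝ} {z : Fin 4 → ℝ}
    (h : HasFDerivAt F L z) (i : Fin 4) : pd i F z = L (Pi.single i 1) := by
  rw [pd, h.fderiv]

/-- The final algebraic identity, with `a = sin φ`, `b = cos φ`, `c = sin θ`, `d = cos θ`. -/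
lemma gaffet_algebra (a b c d p q W : ℝ) (ha : a ≠ 0) (hb : b ≠ 0) (hc : c ≠ 0) (hd : d ≠ 0)
    (h1 : a ^ 2 + b ^ 2 = 1) (h2 : c ^ 2 + d ^ 2 = 1)
    (F0 F1 F2 F3 G0 G1 G2 G3 : ℝ)
    (hF0 : F0 = 2 / 3 * W * (b / a - a / b))
    (hF1 : F1 = -2 * p ^ 2 * d / c ^ 3 + 2 / 3 * W * (2 * d / c - c / d))
    (hF2 : F2 = 2 * p / c ^ 2)
    (hF3 : F3 = 2 * q)
    (hG0 : G0 = -p * ((b ^ 2 - a ^ 2) * d ^ 2 / c ^ 2 * p ^ 2 + 4 * a * b * (d / c) * p * q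
        - (b ^ 2 - a ^ 2) * q ^ 2)
      + ((b ^ 2 - a ^ 2) * (2 * d ^ 2 - c ^ 2) * p + 4 * a * b * c * d * q) * W
      - (a * b * (2 * d ^ 2 - c ^ 2) * p + (a ^ 2 - b ^ 2) * c * d * q) *
        (2 / 3 * W * (b / a - a / b)))
    (hG1 : G1 = -p * (-2 * a * b * d / c ^ 3 * p ^ 2 - (a ^ 2 - b ^ 2) / c ^ 2 * p * q)
      + (-6 * a * b * c * d * p + (a ^ 2 - b ^ 2) * (d ^ 2 - c ^ 2) * q) * W
      - (a * b * (2 * d ^ 2 - c ^ 2) * p + (a ^ 2 - b ^ 2) * c * d * q) *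
        (2 / 3 * W * (2 * d / c - c / d)))
    (hG2 : G2 = -(3 * a * b * d ^ 2 / c ^ 2 * p ^ 2 + 2 * (a ^ 2 - b ^ 2) * (d / c) * p * q
        - a * b * q ^ 2) + a * b * (2 * d ^ 2 - c ^ 2) * W)
    (hG3 : G3 = -p * ((a ^ 2 - b ^ 2) * (d / c) * p - 2 * a * b * q)
      + (a ^ 2 - b ^ 2) * c * d * W) :
    F0 * G2 - F2 * G0 + F1 * G3 - F3 * G1 = 0 := by
  subst hF0 hF1 hF2 hF3 hG0 hG1 hG2 hG3
  have hb2 : b ^ 2 = 1 - a ^ 2 := by linarith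
  have hd2 : d ^ 2 = 1 - c ^ 2 := by linarith
  field_simp
  grind

set_option maxHeartbeats 4000000 in
theorem statement18 (z : Fin 4 → ℝ)
    (hφ : 0 < z 0) (hφ' : z 0 < π / 2) (hθ : 0 < z 1) (hθ' : z 1 < π / 2) :
    pb H1gaf H2gaf z = 0 := by
  have ha : 0 < sin (z 0) := sin_pos_of_pos_of_lt_pi hφ (by linarith [pi_pos])
  have hb : 0 < cos (z 0) := cos_pos_of_mem_Ioo ⟨by linarith, hφ'⟩
  have hc : 0 < sin (z 1) := sin_pos_of_pos_of_lt_pi hθ (by linarith [pi_pos])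
  have hd : 0 < cos (z 1) := cos_pos_of_mem_Ioo ⟨by linarith, hθ'⟩
  have e (i : Fin 4) : HasFDerivAt (fun w : Fin 4 → ℝ => w i)
      (ContinuousLinearMap.proj (R := ℝ) (φ := fun _ : Fin 4 => ℝ) i) z := hasFDerivAt_apply i z
  have s0 := (e 0).sin
  have c0 := (e 0).cos
  have s1 := (e 1).sin
  have c1 := (e 1).cos
  have i1 := (hasDerivAt_inv hc.ne').comp_hasFDerivAt z s1
  have hx1 : HasFDerivAt x1 _ z := s0.mul s1
  have hx2 : HasFDerivAt x2 _ z := c0.mul s1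
  have hx3 : HasFDerivAt x3 _ z := c1
  have hJ1 : HasFDerivAt J1 _ z := (((s0.mul c1).mul i1).mul (e 2)).sub (c0.mul (e 3))
  have hJ2 : HasFDerivAt J2 _ z := (((c0.mul c1).mul i1).mul (e 2)).add (s0.mul (e 3))
  have hJ3 : HasFDerivAt J3 _ z := (e 2).neg
  have hX : 0 < x1 z * x2 z * x3 z := by unfold x1 x2 x3; positivity
  have hW := ((hx1.mul hx2).mul hx3).rpow_const (p := -(2 : ℝ) / 3) (Or.inl hX.ne')
  have hH1 : HasFDerivAt H1gaf _ z := (((hJ1.pow 2).add (hJ2.pow 2)).add (hJ3.pow 2)).sub hW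
  have hH2 : HasFDerivAt H2gaf _ z := ((hJ1.mul hJ2).mul hJ3).add
    (((((hx2.mul hx3).mul hJ1).add ((hx1.mul hx3).mul hJ2)).add ((hx1.mul hx2).mul hJ3)).mul hW)
  have h1 := sin_sq_add_cos_sq (z 0)
  have h2 := sin_sq_add_cos_sq (z 1)
  have hr : (x1 z * x2 z * x3 z) ^ (-(2 : ℝ) / 3 - 1)
      = (x1 z * x2 z * x3 z) ^ (-(2 : ℝ) / 3) / (x1 z * x2 z * x3 z) := rpow_sub_one hX.ne' _
  unfold pb
  apply gaffet_algebra (sin (z 0)) (cos (z 0)) (sin (z 1)) (cos (z 1)) (z 2) (z 3)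
    ((x1 z * x2 z * x3 z) ^ (-(2 : ℝ) / 3)) ha.ne' hb.ne' hc.ne' hd.ne' h1 h2
  all_goals
    first | rw [pd_eq_of_hasFDerivAt hH1] | rw [pd_eq_of_hasFDerivAt hH2]
    simp [hr]
    generalize (x1 z * x2 z * x3 z) ^ (-(2 : ℝ) / 3) = W
    simp only [x1, x2, x3, J1, J2, J3]
    generalize sin (z 0) = a at *
    generalize cos (z 0) = b at *
    generalize sin (z 1) = c at *
    generalize cos (z 1) = d at *
    have hb2 : b ^ 2 = 1 - a ^ 2 := by linarith
    have hd2 : d ^ 2 = 1 - c ^ 2 := by linarith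
    try field_simp
    try grind
end
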